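/- Let A be an n×n real symmetric matrix with all entries nonnegative, and suppose λ₂, the second-largest eigenvalue of A (counted with multiplicity), satisfies λ₂ > 2, with corresponding eigenvector v having both positive and negative coordinates. Let P = {i : v i > 0} and let A_P be the principal submatrix of A on index set P. Then A_P has an eigenvalue λ ≥ λ₂. -/

import Mathlib

theorem stmt_3 (n : ℕ) (A : Matrix (Fin n) (Fin n) ℝ) (hA : A.IsHermitian)
    (hpos : ∀ i j, 0 ≤ A i j) (lam2 : ℝ) (hlam2 : 2 < lam2)
    (v : Fin n → ℝ) (heig : A.mulVec v = lam2 • v)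
    (hP : ∃ i, 0 < v i) (hN : ∃ i, v i < 0) :
    ∃ (lam : ℝ) (w : {i : Fin n // 0 < v i} → ℝ), w ≠ 0 ∧
      (A.submatrix (fun i : {i : Fin n // 0 < v i} => (i : Fin n))
        (fun i : {i : Fin n // 0 < v i} => (i : Fin n))).mulVec w = lam • w ∧
      lam2 ≤ lam := by
  classical
  by_contra! hcon
  set B := A.submatrix (fun i : {i : Fin n // 0 < v i} => (i : Fin n))
        (fun i : {i : Fin n // 0 < v i} => (i : Fin n)) with hB
  have hBH : B.IsHermitian := hA.submatrix _
  have hC : (lam2 • (1 : Matrix {i : Fin n // 0 < v i} {i : Fin n // 0 < v i} ℝ) - B).IsHermitian := by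
    apply Matrix.IsHermitian.sub _ hBH
    simp [Matrix.IsHermitian]
  have hpd : (lam2 • (1 : Matrix {i : Fin n // 0 < v i} {i : Fin n // 0 < v i} ℝ) - B).PosDef := by
    rw [hC.posDef_iff_eigenvalues_pos]
    intro i
    have h1 := hC.mulVec_eigenvectorBasis i
    have h2 : (hC.eigenvectorBasis i).ofLp ≠ 0 := by
      intro h
      exact hC.eigenvectorBasis.orthonormal.ne_zero i (by ext j; exact congrFun h j)
    have h3 := hcon (lam2 - hC.eigenvalues i) _ h2 (by
      rw [Matrix.sub_mulVec, Matrix.smul_mulVec, Matrix.one_mulVec] at h1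
      rw [sub_smul, ← h1]; abel)
    linarith
  have hx : (fun i : {i : Fin n // 0 < v i} => v i) ≠ 0 := by
    obtain ⟨i, hi⟩ := hP
    intro h
    exact hi.ne' (congrFun h ⟨i, hi⟩)
  have h := hpd.dotProduct_mulVec_pos hx
  refine absurd h (not_lt.mpr ?_)
  rw [Matrix.sub_mulVec, Matrix.smul_mulVec, Matrix.one_mulVec]
  refine Finset.sum_nonpos fun i _ => ?_
  have hi := congrFun heig i.1
  simp only [Matrix.mulVec, dotProduct, Pi.smul_apply, smul_eq_mul] at hi
  have hsplit := Fintype.sum_subtype_add_sum_subtype (fun j => 0 < v j) (fun j => A i j * v j)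
  have hneg : ∑ j : {j // ¬ 0 < v j}, A i j * v j ≤ 0 :=
    Finset.sum_nonpos fun j _ => mul_nonpos_of_nonneg_of_nonpos (hpos _ _) (not_lt.mp j.2)
  refine mul_nonpos_of_nonneg_of_nonpos (by simpa using i.2.le) ?_
  simp only [hB, Matrix.mulVec, dotProduct, Pi.smul_apply, Pi.sub_apply, smul_eq_mul, Matrix.submatrix_apply]
  linarith
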